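/- Let 𝒯 be an admissible T-mesh and let A^(1) ≠ A^(2) be anchors such that, for some direction j, the local knot vectors satisfy v_k(A^(1)) = v_k(A^(2)) for all directions k ≠ j. Then A^(1) and A^(2) coincide in all components except the j-th, their global knot vectors in direction j coincide (gv_j(A^(1)) = gv_j(A^(2))), and consequently v_j(A^(1)) ≠ v_j(A^(2)) and v_j(A^(1)) ⋈ v_j(A^(2)). -/

import Mathlib

/-!
The component `A k` of an anchor can be read off its local knot vector `V` in direction `k`, so
anchors agreeing in all knot vectors but the `j`-th agree in all components but the `j`-th
(`comp_eq_of_anchorKV`); the remaining claims are then immediate: the sets `proj A₁ j n` and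
`proj A₂ j n` are equal, hence so are the global knot vectors in direction `j`, both local knot
vectors are blocks of this common global one, and they differ because otherwise `A₁ = A₂`.

The rank condition makes `inf (A k)` an entry of `V` of prescribed rank, so `V` determines it. If
`A k` is a singleton this is all. If `A k = (a, b)`, then `b` is the successor of `a` in `V`. This
rests on three facts about a mesh and its skeletons, for an entity `E`: if `E k` is a singleton,
then `E` lies in the `k`-orthogonal skeleton; if `E k = (a, b)`, then the end faces of `E` at `a`
and at `b` lie in that skeleton, and `E` itself does not meet it. The same facts, together with the
knots supplied by admissibility on both sides of the active region, show that local knot vectors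
exist (`exists_anchorKV`).

The three facts are proved by induction over the bisections, as part of the invariant `Good`.
Bisecting a cell `Q` in direction `j` at its midpoint `m` leaves the `k`-orthogonal skeletons for
`k ≠ j` unchanged and adds the midpoint face of `cl Q` to the `j`-orthogonal one. The only delicate
point is that no unsplit entity with an interval in direction `j` meets the new face. For this the
invariant also records that an entity meeting the closure of a cell lies in it, and that all
interval components are dyadic subintervals of the initial grid, so that one of them which is
contained in `cl (Q j)` and contains `m` must be `Q j` (`IsDyadic.eq_of_mid_mem`).
-/

open Set

namespace TSpline

/-- A box in `ℝ^d`, given componentwise. -/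
abbrev Box (d : ℕ) := Fin d → Set ℝ

/-- The subset of `ℝ^d` determined by a box. -/
def toSet {d : ℕ} (E : Box d) : Set (Fin d → ℝ) := Set.pi Set.univ E

/-- The closed index domain `cl Ω = ∏ₖ [0, Nₖ]`. -/
def domain {d : ℕ} (N : Fin d → ℕ) : Set (Fin d → ℝ) :=
  Set.pi Set.univ (fun k => Set.Icc (0 : ℝ) (N k))

/-- The boundary `∂Ω` of the index domain. -/
def bdryDomain {d : ℕ} (N : Fin d → ℕ) : Set (Fin d → ℝ) := frontier (domain N)

/-- A component which is an integer singleton `{n}`, `0 ≤ n ≤ Nₖ`. -/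
def IsSingletonComp (Nk : ℕ) (S : Set ℝ) : Prop :=
  ∃ n : ℕ, n ≤ Nk ∧ S = {(n : ℝ)}

/-- A component which is an open interval with integer endpoints in `[0, Nₖ]`. -/
def IsIntervalComp (Nk : ℕ) (S : Set ℝ) : Prop :=
  ∃ a b : ℕ, a < b ∧ b ≤ Nk ∧ S = Set.Ioo (a : ℝ) (b : ℝ)

/-- A mesh entity: every component is an integer singleton or an open integer interval. -/
def IsMeshEntity {d : ℕ} (N : Fin d → ℕ) (E : Box d) : Prop :=
  ∀ k, IsSingletonComp (N k) (E k) ∨ IsIntervalComp (N k) (E k)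

/-- The directions in which an entity has a singleton component. -/
def singDirs {d : ℕ} (E : Box d) : Set (Fin d) := {i | ∃ r : ℝ, E i = {r}}

/-- Split all entities of `M` contained in the region `D` whose `j`-th component is `Q j`
into the three children obtained by bisecting the `j`-th component at `m`. -/
def midSplit {d : ℕ} (M : Set (Box d)) (Q : Box d) (j : Fin d) (m : ℝ) (D : Box d) :
    Set (Box d) :=
  (M \ {E | E ∈ M ∧ (∀ k, E k ⊆ D k) ∧ E j = Q j}) ∪
  ⋃ E ∈ {E | E ∈ M ∧ (∀ k, E k ⊆ D k) ∧ E j = Q j},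
    ({Function.update E j (Set.Ioo (sInf (Q j)) m),
      Function.update E j {m},
      Function.update E j (Set.Ioo m (sSup (Q j)))} : Set (Box d))

/-- One symmetric bisection of a `d`-dimensional cell with integer midpoint. -/
def BisectStep {d : ℕ} (N : Fin d → ℕ) (M M' : Set (Box d)) : Prop :=
  ∃ Q ∈ M, ∃ j : Fin d, ∃ a b mid : ℕ,
    (∀ k, IsIntervalComp (N k) (Q k)) ∧
    Q j = Set.Ioo (a : ℝ) (b : ℝ) ∧ a + b = 2 * mid ∧
    M' = midSplit M Q j (mid : ℝ) (fun k => closure (Q k))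

/-- A tensor-product mesh with integer breakpoints. -/
def IsTensorMesh {d : ℕ} (N : Fin d → ℕ) (M : Set (Box d)) : Prop :=
  ∃ G : Fin d → Finset ℕ,
    (∀ k, 0 ∈ G k ∧ N k ∈ G k ∧ ∀ n ∈ G k, n ≤ N k) ∧
    M = {E | ∀ k, (∃ n ∈ G k, E k = {(n : ℝ)}) ∨
          (∃ a ∈ G k, ∃ b ∈ G k, a < b ∧ (∀ c ∈ G k, c ≤ a ∨ b ≤ c) ∧
            E k = Set.Ioo (a : ℝ) (b : ℝ))}

/-- A T-mesh of the index domain: a finite disjoint partition of `cl Ω` into mesh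
entities, obtained from a tensor-product mesh by repeated symmetric bisections. -/
structure TMesh (d : ℕ) (N : Fin d → ℕ) where
  entities : Set (Box d)
  finite : entities.Finite
  mem_entity : ∀ E ∈ entities, IsMeshEntity N E
  union_eq : (⋃ E ∈ entities, toSet E) = domain N
  pairwise_disjoint : ∀ E ∈ entities, ∀ F ∈ entities, E ≠ F → toSet E ∩ toSet F = ∅
  constructed : ∃ M₀ : Set (Box d), IsTensorMesh N M₀ ∧
    Relation.ReflTransGen (BisectStep N) M₀ entities

variable {d : ℕ} {N : Fin d → ℕ}

/-- `H^k`: the entities with exactly `d - k` singleton components. -/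
def Hdim (T : TMesh d N) (k : ℕ) : Set (Box d) :=
  {E ∈ T.entities | (singDirs E).ncard = d - k}

/-- The `j`-orthogonal skeleton `Sk_j`. -/
def skel (T : TMesh d N) (j : Fin d) : Set (Fin d → ℝ) :=
  ⋃ F ∈ {F ∈ Hdim T (d - 1) | ∃ r : ℝ, F j = {r}}, closure (toSet F)

/-- The valence of a `(d-2)`-dimensional entity: the number of hyperfaces in whose
boundary it lies. -/
noncomputable def valence (T : TMesh d N) (J : Box d) : ℕ :=
  {F ∈ Hdim T (d - 1) | toSet J ⊆ frontier (toSet F)}.ncard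

/-- A T-junction (hanging interface). -/
def IsTJunction (T : TMesh d N) (J : Box d) : Prop :=
  J ∈ Hdim T (d - 2) ∧ ¬ toSet J ⊆ bdryDomain N ∧ valence T J < 4

/-- `TJData T J Q i j`: `Q` is an associated cell of the T-junction `J`, with orthogonal
direction `i` and pointing direction `j`. -/
def TJData (T : TMesh d N) (J Q : Box d) (i j : Fin d) : Prop :=
  Q ∈ Hdim T d ∧ toSet J ⊆ frontier (toSet Q) ∧
  closure (toSet J) ∩ Set.pi Set.univ (fun k => frontier (Q k)) = ∅ ∧
  i ≠ j ∧ (∃ r : ℝ, J i = {r}) ∧ (∃ r : ℝ, J j = {r}) ∧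
  J i ⊆ Q i ∧ J i ≠ Q i ∧ J j ⊆ frontier (Q j)

/-- `⌊(p_k + 1)/2⌋`. -/
def halfdeg (p : Fin d → ℕ) (k : Fin d) : ℕ := (p k + 1) / 2

/-- The active region `AR_p`. -/
def activeRegion (N p : Fin d → ℕ) : Set (Fin d → ℝ) :=
  Set.pi Set.univ (fun k => Set.Icc (halfdeg p k : ℝ) ((N k : ℝ) - (halfdeg p k : ℝ)))

/-- The slice `S_k(n)`. -/
def slice (N : Fin d → ℕ) (k : Fin d) (n : ℕ) : Set (Fin d → ℝ) :=
  {x ∈ domain N | x k = (n : ℝ)}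

/-- The `k`-th frame region `FR^(k)`. -/
def frameRegion (N p : Fin d → ℕ) (k : Fin d) : Set (Fin d → ℝ) :=
  {x ∈ domain N | x k ∈ Set.Icc (0 : ℝ) (halfdeg p k : ℝ) ∪
      Set.Icc ((N k : ℝ) - (halfdeg p k : ℝ)) (N k : ℝ)}

/-- Admissibility of a T-mesh. -/
def Admissible (p : Fin d → ℕ) (T : TMesh d N) : Prop :=
  (∀ k : Fin d, ∀ J Q : Box d, ∀ i j : Fin d, IsTJunction T J → TJData T J Q i j →
      (i = k ∨ j = k) → ¬ toSet J ⊆ frameRegion N p k) ∧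
  (∀ k : Fin d, ∀ n : ℕ, (n ≤ halfdeg p k ∨ (N k - halfdeg p k ≤ n ∧ n ≤ N k)) →
      slice N k n ⊆ skel T k)

/-- Anchors of degree `p`. -/
def IsAnchor (p : Fin d → ℕ) (T : TMesh d N) (A : Box d) : Prop :=
  A ∈ T.entities ∧ toSet A ⊆ activeRegion N p ∧
  ∀ j : Fin d, (∃ r : ℝ, A j = {r}) ↔ Odd (p j)

/-- `P_{j,n}(E)`: replace the `j`-th component of `E` by `{n}`. -/
def proj {d : ℕ} (E : Box d) (j : Fin d) (n : ℕ) : Box d :=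
  Function.update E j {(n : ℝ)}

/-- The global knot vector `gv_j(E)` (as a set of integer indices). -/
def gv (T : TMesh d N) (j : Fin d) (E : Box d) : Set ℕ :=
  {n | n ≤ N j ∧ toSet (proj E j n) ⊆ skel T j}

/-- `V` is a block of consecutive entries of `G`. -/
def IsBlockOf (V G : Set ℕ) : Prop :=
  V ⊆ G ∧ V.Finite ∧ ∀ g ∈ G, ∀ a ∈ V, ∀ b ∈ V, a ≤ g → g ≤ b → g ∈ V

/-- Two knot vectors overlap (`⋈`): both occur as blocks of consecutive entries of a
common knot vector. -/
def Overlaps (V₁ V₂ : Set ℕ) : Prop :=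
  ∃ W : Set ℕ, W.Finite ∧ IsBlockOf V₁ W ∧ IsBlockOf V₂ W

/-- The convex hull in `ℝ` of a set of integer indices. -/
def convOf (V : Set ℕ) : Set ℝ := convexHull ℝ ((fun n : ℕ => (n : ℝ)) '' V)

/-- The local knot vector of an anchor `A` in direction `j`: the block of `p_j + 2`
consecutive entries of `gv_j(A)` whose entry of rank `⌊(p_j+1)/2⌋` is `inf A_j`. -/
def IsAnchorKV (T : TMesh d N) (p : Fin d → ℕ) (A : Box d) (j : Fin d) (V : Set ℕ) : Prop :=
  IsBlockOf V (gv T j A) ∧ V.ncard = p j + 2 ∧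
  ∃ a : ℕ, (a : ℝ) = sInf (A j) ∧ a ∈ V ∧ {v ∈ V | v < a}.ncard = halfdeg p j

open Classical in
noncomputable def anchorKV (T : TMesh d N) (p : Fin d → ℕ) (A : Box d) (j : Fin d) :
    Set ℕ :=
  if h : ∃ V, IsAnchorKV T p A j V then h.choose else ∅

/-- The index support of an anchor. -/
noncomputable def suppA (T : TMesh d N) (p : Fin d → ℕ) (A : Box d) : Set (Fin d → ℝ) :=
  Set.pi Set.univ (fun k => convOf (anchorKV T p A k))

/-- The local knot vector of a T-junction `J` (with associated cell `Q`, orthogonal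
direction `i`, pointing direction `j`) in direction `k`. -/
def IsTJKV (T : TMesh d N) (p : Fin d → ℕ) (J Q : Box d) (i j k : Fin d) (V : Set ℕ) :
    Prop :=
  if k = i then ∃ t : ℕ, J i = {(t : ℝ)} ∧ V = {t}
  else if k = j then
    IsBlockOf V (gv T j J) ∧ V.ncard = p j + 1 ∧
    ((Even (p j) ∧ ∃ t : ℕ, J j = {(t : ℝ)} ∧ t ∈ V ∧ {v ∈ V | v < t}.ncard = p j / 2) ∨
     (Odd (p j) ∧ ∃ a b : ℕ, (a : ℝ) = sInf (Q j) ∧ (b : ℝ) = sSup (Q j) ∧ a ∈ V ∧ b ∈ V ∧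
        {v ∈ V | v < a}.ncard = p j / 2 ∧ {v ∈ V | v < b}.ncard = p j / 2 + 1))
  else
    IsBlockOf V (gv T k J) ∧ V.ncard = p k + 2 + p k % 2 ∧
    ∃ a b : ℕ, a ∈ V ∧ b ∈ V ∧ J k = Set.Ioo (a : ℝ) (b : ℝ) ∧
      {v ∈ V | v < a}.ncard = (p k + 1) / 2 ∧ {v ∈ V | v < b}.ncard = (p k + 1) / 2 + 1

/-- Local knot vector of a T-junction, quantifying over the (unique) associated data. -/
def IsTJKVFull (T : TMesh d N) (p : Fin d → ℕ) (J : Box d) (k : Fin d) (V : Set ℕ) :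
    Prop :=
  ∃ Q : Box d, ∃ i j : Fin d, TJData T J Q i j ∧ IsTJKV T p J Q i j k V

open Classical in
noncomputable def tjKV (T : TMesh d N) (p : Fin d → ℕ) (J : Box d) (k : Fin d) : Set ℕ :=
  if h : ∃ V, IsTJKVFull T p J k V then h.choose else ∅

/-- The geometric T-junction extension `GTJ(J)`. -/
noncomputable def GTJ (T : TMesh d N) (p : Fin d → ℕ) (J : Box d) : Set (Fin d → ℝ) :=
  Set.pi Set.univ (fun k => convOf (tjKV T p J k))

/-- `J` is a T-junction with orthogonal direction `i` and pointing direction `j`. -/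
def HasDirs (T : TMesh d N) (J : Box d) (i j : Fin d) : Prop :=
  IsTJunction T J ∧ ∃ Q : Box d, TJData T J Q i j

/-- Strong geometric analysis-suitability. -/
def SGAS (T : TMesh d N) (p : Fin d → ℕ) : Prop :=
  ∀ J₁ J₂ : Box d, ∀ i₁ j₁ i₂ j₂ : Fin d,
    HasDirs T J₁ i₁ j₁ → HasDirs T J₂ i₂ j₂ → i₁ ≠ i₂ →
    GTJ T p J₁ ∩ GTJ T p J₂ = ∅

/-- Weak geometric analysis-suitability. -/
def WGAS (T : TMesh d N) (p : Fin d → ℕ) : Prop :=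
  ∀ J₁ J₂ : Box d, ∀ i₁ j₁ i₂ j₂ : Fin d,
    HasDirs T J₁ i₁ j₁ → HasDirs T J₂ i₂ j₂ → i₁ ≠ i₂ → j₁ ≠ j₂ →
    GTJ T p J₁ ∩ GTJ T p J₂ = ∅

/-- The abstract T-junction extension `ATJ_j(n)`. -/
noncomputable def ATJ (T : TMesh d N) (p : Fin d → ℕ) (j : Fin d) (n : ℕ) :
    Set (Fin d → ℝ) :=
  slice N j n ∩
  (⋃ A ∈ {A : Box d | IsAnchor p T A ∧ n ∈ gv T j A}, suppA T p A) ∩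
  (⋃ A ∈ {A : Box d | IsAnchor p T A ∧ n ∉ gv T j A}, suppA T p A)

/-- `ATJ_j = ⋃ₙ ATJ_j(n)`. -/
noncomputable def ATJfull (T : TMesh d N) (p : Fin d → ℕ) (j : Fin d) :
    Set (Fin d → ℝ) :=
  ⋃ n ∈ Set.Iic (N j), ATJ T p j n

/-- Abstract analysis-suitability. -/
def AAS (T : TMesh d N) (p : Fin d → ℕ) : Prop :=
  ∀ i j : Fin d, i ≠ j → ∀ n m : ℕ, n ≤ N i → m ≤ N j →
    ATJ T p i n ∩ ATJ T p j m = ∅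

/-- Two anchors weakly partially overlap. -/
def WeakPartOverlap (T : TMesh d N) (p : Fin d → ℕ) (A₁ A₂ : Box d) : Prop :=
  ∃ ℓ : Fin d, anchorKV T p A₁ ℓ ≠ anchorKV T p A₂ ℓ ∧
    Overlaps (anchorKV T p A₁ ℓ) (anchorKV T p A₂ ℓ)

/-- Two anchors strongly partially overlap. -/
def StrongPartOverlap (T : TMesh d N) (p : Fin d → ℕ) (A₁ A₂ : Box d) : Prop :=
  suppA T p A₁ ∩ suppA T p A₂ = ∅ ∨
  d - 1 ≤ {k : Fin d | Overlaps (anchorKV T p A₁ k) (anchorKV T p A₂ k)}.ncard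

/-- Weak dual-compatibility. -/
def WDC (T : TMesh d N) (p : Fin d → ℕ) : Prop :=
  ∀ A₁ A₂ : Box d, IsAnchor p T A₁ → IsAnchor p T A₂ → A₁ ≠ A₂ →
    WeakPartOverlap T p A₁ A₂

/-- Strong dual-compatibility. -/
def SDC (T : TMesh d N) (p : Fin d → ℕ) : Prop :=
  ∀ A₁ A₂ : Box d, IsAnchor p T A₁ → IsAnchor p T A₂ → A₁ ≠ A₂ →
    StrongPartOverlap T p A₁ A₂

/-- `Q'` is a neighboring cell of `Q` in direction `ℓ`. -/
def NeighborInDir (T : TMesh d N) (Q Q' : Box d) (ℓ : Fin d) : Prop :=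
  Q' ∈ Hdim T d ∧ Q' ≠ Q ∧
  (sSup (Q ℓ) = sInf (Q' ℓ) ∨ sSup (Q' ℓ) = sInf (Q ℓ)) ∧
  ∀ k : Fin d, k ≠ ℓ → (Q k ∩ Q' k).Nonempty

/-- Assumption A: every cell has neighbor cells in the active region in at least three
pairwise distinct directions. -/
def AssumptionA (T : TMesh d N) (p : Fin d → ℕ) : Prop :=
  ∀ Q ∈ Hdim T d, ∃ l₁ l₂ l₃ : Fin d, l₁ ≠ l₂ ∧ l₁ ≠ l₃ ∧ l₂ ≠ l₃ ∧
    ∀ l ∈ ({l₁, l₂, l₃} : Set (Fin d)),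
      ∃ Q' : Box d, NeighborInDir T Q Q' l ∧ toSet Q' ⊆ activeRegion N p

/-- The extended region `D` of Algorithm `subdiv`. -/
def extendD (N p : Fin d → ℕ) (Q : Box d) (j : Fin d) : Box d := fun ℓ =>
  closure (Q ℓ) ∪
  {x : ℝ | ℓ ≠ j ∧ sInf (Q ℓ) = (halfdeg p ℓ : ℝ) ∧
      x ∈ Set.Icc (0 : ℝ) (halfdeg p ℓ : ℝ)} ∪
  {x : ℝ | ℓ ≠ j ∧ sSup (Q ℓ) = (N ℓ : ℝ) - (halfdeg p ℓ : ℝ) ∧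
      x ∈ Set.Icc ((N ℓ : ℝ) - (halfdeg p ℓ : ℝ)) (N ℓ : ℝ)}

/-- The entity set produced by Algorithm `subdiv(𝒯, Q, j)`. -/
def subdivEntities (N p : Fin d → ℕ) (M : Set (Box d)) (Q : Box d) (j : Fin d) :
    Set (Box d) :=
  midSplit M Q j ((sInf (Q j) + sSup (Q j)) / 2) (extendD N p Q j)

open Classical in
/-- The componentwise minimal bounding box `M(E,F)`. -/
noncomputable def MBox {d : ℕ} (E F : Box d) : Box d := fun ℓ =>
  if (E ℓ ∩ F ℓ).Nonempty then E ℓ ∩ F ℓ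
  else if sSup (E ℓ) ≤ sInf (F ℓ) then Set.Icc (sSup (E ℓ)) (sInf (F ℓ))
  else Set.Icc (sSup (F ℓ)) (sInf (E ℓ))

/-- `V` is the local knot vector of `E` (an anchor or a T-junction) in direction `j`. -/
def IsLocalKVOf (T : TMesh d N) (p : Fin d → ℕ) (E : Box d) (j : Fin d) (V : Set ℕ) :
    Prop :=
  (IsAnchor p T E ∧ IsAnchorKV T p E j V) ∨
  (IsTJunction T E ∧ IsTJKVFull T p E j V)

end TSpline

namespace TSpline

/-! ### Dyadic subintervals of a one-dimensional grid -/

/-- `(a, b)` is a dyadic subinterval of a grid interval `(g, h)` of `G`: the latter has been cut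
into `2 ^ n` pieces of integer length `l`, and `(a, b)` is the piece number `i`. -/
def IsDyadic (G : Finset ℕ) (a b : ℕ) : Prop :=
  ∃ g ∈ G, ∃ h ∈ G, (∀ c ∈ G, c ≤ g ∨ h ≤ c) ∧
    ∃ n i l : ℕ, 0 < l ∧ h = g + 2 ^ n * l ∧ i < 2 ^ n ∧ a = g + i * l ∧ b = a + l

theorem IsDyadic.lt {G : Finset ℕ} {a b : ℕ} (h : IsDyadic G a b) : a < b := by
  obtain ⟨g, _, h, _, _, n, i, l, hl, -, -, -, rfl⟩ := h
  omega

theorem IsDyadic.halves {G : Finset ℕ} {a b m : ℕ} (h : IsDyadic G a b) (hm : a + b = 2 * m) :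
    IsDyadic G a m ∧ IsDyadic G m b := by
  obtain ⟨g, hg, h, hh, hc, n, i, l, hl, he, hi, ha, hb⟩ := h
  obtain ⟨l', rfl⟩ : ∃ l', l = 2 * l' := ⟨m - a, by omega⟩
  have hpow : 2 ^ (n + 1) = 2 ^ n * 2 := pow_succ 2 n
  refine ⟨⟨g, hg, h, hh, hc, n + 1, 2 * i, l', by omega, ?_, by omega, ?_, by omega⟩,
    ⟨g, hg, h, hh, hc, n + 1, 2 * i + 1, l', by omega, ?_, by omega, ?_, by omega⟩⟩
  · rw [he, hpow]; ring
  · rw [ha]; ring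
  · rw [he, hpow]; ring
  · have : m = a + l' := by omega
    rw [this, ha]; ring

/-- Dyadic intervals are never cut by the midpoint of a larger one: the midpoint of `(a', b')` is
an endpoint of a piece as soon as the pieces are shorter than `(a', b')`. -/
theorem IsDyadic.eq_of_mid_mem {G : Finset ℕ} {a b a' b' m : ℕ} (h : IsDyadic G a b)
    (h' : IsDyadic G a' b') (hm : a' + b' = 2 * m) (ham : a < m) (hmb : m < b)
    (haa : a' ≤ a) (hbb : b ≤ b') : a = a' ∧ b = b' := by
  obtain ⟨g, hg, e, hh, hc, n, i, l, hl, he, hi, ha, hb⟩ := h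
  obtain ⟨g', hg', e', hh', hc', n', i', l', hl', he', hi', ha', hb'⟩ := h'
  have hbe : b ≤ e := by
    have : (i + 1) * l ≤ 2 ^ n * l := Nat.mul_le_mul_right _ hi
    rw [hb, ha, he]; linarith
  have hbe' : b' ≤ e' := by
    have : (i' + 1) * l' ≤ 2 ^ n' * l' := Nat.mul_le_mul_right _ hi'
    rw [hb', ha', he']; linarith
  have hga : g ≤ a := by rw [ha]; exact Nat.le_add_right _ _
  have hga' : g' ≤ a' := by rw [ha']; exact Nat.le_add_right _ _
  have hgg : g = g' := by
    have h1 := hc g' hg'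
    have h2 := hc' g hg
    omega
  subst hgg
  have hee : e = e' := by
    have h1 := hc e' hh'
    have h2 := hc' e hh
    omega
  subst hee
  have hll : 2 ^ n * l = 2 ^ n' * l' := by omega
  have hle : l ≤ l' := by omega
  have hnn : n' ≤ n := by
    by_contra hcon
    push Not at hcon
    have h1 : 2 ^ n < 2 ^ n' := Nat.pow_lt_pow_right (by norm_num) hcon
    nlinarith
  obtain ⟨q, rfl⟩ := Nat.exists_eq_add_of_le hnn
  have hl2 : l' = 2 ^ q * l := by
    have h0 : 0 < 2 ^ n' := by positivity
    apply Nat.eq_of_mul_eq_mul_left h0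
    rw [← hll, pow_add]; ring
  rcases q with _ | q
  · simp at hl2
    omega
  · exfalso
    have hmm : m = g + (2 * i' + 1) * 2 ^ q * l := by
      have h3 : 2 * m = 2 * (g + (2 * i' + 1) * 2 ^ q * l) := by
        rw [← hm, hb', ha', hl2, pow_succ]; ring
      omega
    have h1 : i * l < (2 * i' + 1) * 2 ^ q * l := by omega
    have h2 : (2 * i' + 1) * 2 ^ q * l < (i + 1) * l := by
      have : (i + 1) * l = i * l + l := by ring
      omega
    have h1' := lt_of_mul_lt_mul_right h1 (Nat.zero_le _)
    have h2' := lt_of_mul_lt_mul_right h2 (Nat.zero_le _)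
    omega

/-! ### Consecutive blocks of prescribed size -/

theorem exists_lower_block {α : Type*} [LinearOrder α] (S : Finset α) (c : ℕ) (hc : c ≤ S.card) :
    ∃ B ⊆ S, B.card = c ∧ ∀ x ∈ B, ∀ y ∈ S, y ≤ x → y ∈ B := by
  induction c with
  | zero => exact ⟨∅, by simp, rfl, by simp⟩
  | succ c ih =>
    obtain ⟨B, hB, hcard, hlow⟩ := ih (by omega)
    have hne : (S \ B).Nonempty := by
      rw [← Finset.card_pos, Finset.card_sdiff_of_subset hB]; omega
    obtain ⟨t, hmem, hmin⟩ : ∃ t ∈ S \ B, ∀ y ∈ S \ B, t ≤ y :=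
      ⟨_, Finset.min'_mem _ hne, fun y hy => Finset.min'_le _ y hy⟩
    rw [Finset.mem_sdiff] at hmem
    refine ⟨insert t B, ?_, ?_, ?_⟩
    · intro x hx
      rcases Finset.mem_insert.1 hx with rfl | hx
      exacts [hmem.1, hB hx]
    · rw [Finset.card_insert_of_notMem hmem.2, hcard]
    · intro x hx y hy hyx
      by_cases hyB : y ∈ B
      · exact Finset.mem_insert_of_mem hyB
      · have hty := hmin y (Finset.mem_sdiff.2 ⟨hy, hyB⟩)
        rcases Finset.mem_insert.1 hx with rfl | hx
        · rw [le_antisymm hyx hty]; exact Finset.mem_insert_self _ _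
        · exact absurd (hlow x hx y hy hyx) hyB

theorem exists_upper_block (S : Finset ℕ) (c : ℕ) (hc : c ≤ S.card) :
    ∃ B ⊆ S, B.card = c ∧ ∀ x ∈ B, ∀ y ∈ S, x ≤ y → y ∈ B :=
  exists_lower_block (α := ℕᵒᵈ) S c hc

/-- A finite set with enough elements on both sides of `a` has a block of consecutive entries in
which `a` has the prescribed rank. -/
theorem exists_block {G : Set ℕ} (hG : G.Finite) {a h u : ℕ} (ha : a ∈ G) (L U : Finset ℕ)
    (hL : ∀ x ∈ L, x ∈ G ∧ x < a) (hU : ∀ x ∈ U, x ∈ G ∧ a < x) (hLc : L.card = h)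
    (hUc : U.card = u) :
    ∃ V, IsBlockOf V G ∧ V.ncard = h + u + 1 ∧ a ∈ V ∧ {v ∈ V | v < a}.ncard = h := by
  classical
  have hLs : h ≤ (hG.toFinset.filter (· < a)).card := by
    rw [← hLc]
    exact Finset.card_le_card fun x hx => by simpa using hL x hx
  have hUs : u ≤ (hG.toFinset.filter (a < ·)).card := by
    rw [← hUc]
    exact Finset.card_le_card fun x hx => by simpa using hU x hx
  obtain ⟨B, hB, hBc, hBu⟩ := exists_upper_block _ _ hLs
  obtain ⟨C, hC, hCc, hCl⟩ := exists_lower_block _ _ hUs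
  have hB' : ∀ x ∈ B, x ∈ G ∧ x < a := fun x hx => by simpa using hB hx
  have hC' : ∀ x ∈ C, x ∈ G ∧ a < x := fun x hx => by simpa using hC hx
  have hdis : Disjoint B (insert a C) := by
    rw [Finset.disjoint_left]
    intro x hx hx'
    have h1 := hB' x hx
    rcases Finset.mem_insert.1 hx' with rfl | hx'
    · omega
    · have h2 := hC' x hx'
      omega
  have haC : a ∉ C := fun hx => lt_irrefl _ (hC' a hx).2
  refine ⟨↑(B ∪ insert a C), ⟨?_, Finset.finite_toSet _, ?_⟩, ?_, by simp, ?_⟩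
  · intro x hx
    simp only [Finset.coe_union, Finset.coe_insert, Set.mem_union, Set.mem_insert_iff,
      Finset.mem_coe] at hx
    rcases hx with hx | rfl | hx
    exacts [(hB' x hx).1, ha, (hC' x hx).1]
  · intro g hg x hx y hy hxg hgy
    simp only [Finset.coe_union, Finset.coe_insert, Set.mem_union, Set.mem_insert_iff,
      Finset.mem_coe] at hx hy ⊢
    rcases lt_trichotomy g a with hga | rfl | hga
    · left
      have hxB : x ∈ B := by
        rcases hx with hx | rfl | hx
        · exact hx
        · omega
        · have := (hC' x hx).2
          omega
      exact hBu x hxB g (by simp [hg, hga]) hxg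
    · exact Or.inr (Or.inl rfl)
    · right; right
      have hyC : y ∈ C := by
        rcases hy with hy | rfl | hy
        · have := (hB' y hy).2
          omega
        · omega
        · exact hy
      exact hCl y hyC g (by simp [hg, hga]) hgy
  · rw [Set.ncard_coe_finset, Finset.card_union_of_disjoint hdis,
      Finset.card_insert_of_notMem haC]
    omega
  · have : {v ∈ (↑(B ∪ insert a C) : Set ℕ) | v < a} = ↑B := by
      ext v
      simp only [Finset.coe_union, Finset.coe_insert, Set.mem_union, Set.mem_insert_iff,
        Finset.mem_coe, Set.mem_ofPred_eq]
      constructor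
      · rintro ⟨hv | rfl | hv, hva⟩
        · exact hv
        · omega
        · have := (hC' v hv).2
          omega
      · exact fun hv => ⟨Or.inl hv, (hB' v hv).2⟩
    rw [this, Set.ncard_coe_finset, hBc]

/-! ### Invariants of the bisection process -/

/-- The `k`-orthogonal skeleton of a set of boxes, described pointwise. -/
def skelOf {d : ℕ} (M : Set (Box d)) (k : Fin d) : Set (Fin d → ℝ) :=
  {x | ∃ F ∈ M, singDirs F = {k} ∧ ∀ i, x i ∈ closure (F i)}

/-- The properties preserved by bisections of a mesh that starts from the tensor-product grid
`G`. -/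
structure Good {d : ℕ} (G : Fin d → Finset ℕ) (M : Set (Box d)) : Prop where
  /-- every component is a singleton or a dyadic subinterval of the grid -/
  comp : ∀ E ∈ M, ∀ k, (∃ r : ℝ, E k = {r}) ∨
    ∃ a b : ℕ, IsDyadic (G k) a b ∧ E k = Ioo (a : ℝ) b
  /-- an entity meeting the closure of a cell lies in that closure -/
  conf : ∀ Q ∈ M, singDirs Q = ∅ → ∀ E ∈ M, (∀ k, (E k ∩ closure (Q k)).Nonempty) →
    ∀ k, E k ⊆ closure (Q k)
  /-- an entity with singleton `k`-th component lies in the `k`-orthogonal skeleton -/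
  sing : ∀ E ∈ M, ∀ k, (∃ r : ℝ, E k = {r}) → toSet E ⊆ skelOf M k
  /-- so do both end faces of an entity whose `k`-th component is an interval -/
  ends : ∀ E ∈ M, ∀ k, ∀ a b : ℝ, a < b → E k = Ioo a b →
    toSet (Function.update E k {a}) ⊆ skelOf M k ∧ toSet (Function.update E k {b}) ⊆ skelOf M k
  /-- an entity whose `k`-th component is an interval misses the `k`-orthogonal skeleton -/
  avoid : ∀ E ∈ M, ∀ k, ∀ a b : ℝ, a < b → E k = Ioo a b → ∀ x ∈ toSet E, x ∉ skelOf M k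

theorem Ioo_ne_singleton {a b : ℝ} (hab : a < b) (r : ℝ) : Ioo a b ≠ {r} := by
  intro h
  have h1 : (2 * a + b) / 3 ∈ Ioo a b := ⟨by linarith, by linarith⟩
  have h2 : (a + 2 * b) / 3 ∈ Ioo a b := ⟨by linarith, by linarith⟩
  rw [h, mem_singleton_iff] at h1 h2
  linarith

theorem Ioo_inj {a b a' b' : ℝ} (hab : a < b) (hab' : a' < b') (h : Ioo a b = Ioo a' b') :
    a = a' ∧ b = b' := by
  constructor
  · rw [← csInf_Ioo hab, h, csInf_Ioo hab']
  · rw [← csSup_Ioo hab, h, csSup_Ioo hab']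

theorem skel_eq_skelOf {d : ℕ} {N : Fin d → ℕ} (T : TMesh d N) (k : Fin d) :
    skel T k = skelOf T.entities k := by
  ext x
  have hd : d - (d - 1) = 1 := by have := k.pos; omega
  simp only [skel, Hdim, skelOf, hd, mem_iUnion, exists_prop, toSet, closure_pi_set, mem_pi,
    mem_univ, true_imp_iff, mem_ofPred_eq]
  constructor
  · rintro ⟨F, ⟨⟨hF, hs⟩, hr⟩, hx⟩
    refine ⟨F, hF, ?_, hx⟩
    obtain ⟨i, hi⟩ := ncard_eq_one.1 hs
    have hk : k ∈ singDirs F := hr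
    rw [hi, mem_singleton_iff] at hk
    rw [hi, hk]
  · rintro ⟨F, hF, hs, hx⟩
    have hk : k ∈ singDirs F := by rw [hs]; rfl
    exact ⟨F, ⟨⟨hF, by rw [hs, ncard_singleton]⟩, hk⟩, hx⟩

theorem closure_Ioo_of_lt {a b : ℝ} (h : a < b) : closure (Ioo a b) = Icc a b :=
  closure_Ioo h.ne

/-- Two grid intervals whose closures meet in an interior point of one of them coincide. -/
theorem grid_interval_eq {G : Finset ℕ} {a b a' b' : ℕ} (ha : a ∈ G) (hb : b ∈ G)
    (hab : ∀ c ∈ G, c ≤ a ∨ b ≤ c) (ha' : a' ∈ G) (hb' : b' ∈ G)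
    (hab' : ∀ c ∈ G, c ≤ a' ∨ b' ≤ c) (hlt' : a' < b') {x : ℝ}
    (hx : x ∈ Ioo (a : ℝ) b) (hx' : x ∈ Icc (a' : ℝ) b') : a = a' ∧ b = b' := by
  have h1 : a' < b := by exact_mod_cast hx'.1.trans_lt hx.2
  have h2 : a < b' := by exact_mod_cast hx.1.trans_le hx'.2
  have := hab a' ha'
  have := hab b' hb'
  have := hab' a ha
  have := hab' b hb
  omega

theorem exists_grid_interval {G : Finset ℕ} {N n : ℕ} (hN : 0 < N) (h0 : 0 ∈ G) (hNG : N ∈ G)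
    (hle : ∀ m ∈ G, m ≤ N) (hn : n ∈ G) :
    ∃ a ∈ G, ∃ b ∈ G, a < b ∧ (∀ c ∈ G, c ≤ a ∨ b ≤ c) ∧ (n = a ∨ n = b) := by
  classical
  by_cases hlt : n < N
  · have hne : (G.filter (n < ·)).Nonempty := ⟨N, by simp [hNG, hlt]⟩
    obtain ⟨b, hb, hmin⟩ : ∃ b ∈ G.filter (n < ·), ∀ y ∈ G.filter (n < ·), b ≤ y :=
      ⟨_, Finset.min'_mem _ hne, fun y hy => Finset.min'_le _ y hy⟩
    rw [Finset.mem_filter] at hb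
    refine ⟨n, hn, b, hb.1, hb.2, fun c hc => ?_, Or.inl rfl⟩
    by_cases hcn : c ≤ n
    · exact Or.inl hcn
    · exact Or.inr (hmin c (Finset.mem_filter.2 ⟨hc, by omega⟩))
  · have hnN : n = N := le_antisymm (hle n hn) (by omega)
    have hne : (G.filter (· < n)).Nonempty := ⟨0, by simp [h0]; omega⟩
    obtain ⟨a, ha, hmax⟩ : ∃ a ∈ G.filter (· < n), ∀ y ∈ G.filter (· < n), y ≤ a :=
      ⟨_, Finset.max'_mem _ hne, fun y hy => Finset.le_max' _ y hy⟩
    rw [Finset.mem_filter] at ha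
    refine ⟨a, ha.1, n, hn, ha.2, fun c hc => ?_, Or.inr rfl⟩
    by_cases hcn : n ≤ c
    · exact Or.inr hcn
    · exact Or.inl (hmax c (Finset.mem_filter.2 ⟨hc, by omega⟩))

/-- In a tensor-product mesh every entity lies in the closure of a cell, so replacing one component
by a grid point gives a set inside the closure of a hyperface. -/
theorem tensor_update_subset {d : ℕ} {N : Fin d → ℕ} (hN : ∀ k, 0 < N k)
    {G : Fin d → Finset ℕ} (hG : ∀ k, 0 ∈ G k ∧ N k ∈ G k ∧ ∀ n ∈ G k, n ≤ N k)
    {M : Set (Box d)} (hM : M = {E | ∀ k, (∃ n ∈ G k, E k = {(n : ℝ)}) ∨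
          (∃ a ∈ G k, ∃ b ∈ G k, a < b ∧ (∀ c ∈ G k, c ≤ a ∨ b ≤ c) ∧
            E k = Set.Ioo (a : ℝ) (b : ℝ))}) {E : Box d} (hE : E ∈ M) (k : Fin d) {n : ℕ}
    (hn : n ∈ G k) : toSet (Function.update E k {(n : ℝ)}) ⊆ skelOf M k := by
  have hex : ∀ i, ∃ S : Set ℝ, E i ⊆ closure S ∧ ∃ a ∈ G i, ∃ b ∈ G i, a < b ∧
      (∀ c ∈ G i, c ≤ a ∨ b ≤ c) ∧ S = Ioo (a : ℝ) b := by
    intro i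
    have hEi := hE
    rw [hM] at hEi
    rcases hEi i with ⟨m, hm, he⟩ | ⟨a, ha, b, hb, hab, hc, he⟩
    · obtain ⟨a, ha, b, hb, hab, hc, hor⟩ :=
        exists_grid_interval (hN i) (hG i).1 (hG i).2.1 (hG i).2.2 hm
      refine ⟨_, ?_, a, ha, b, hb, hab, hc, rfl⟩
      have hab' : (a : ℝ) < b := by exact_mod_cast hab
      rw [he, closure_Ioo_of_lt hab', singleton_subset_iff]
      rcases hor with rfl | rfl
      exacts [⟨le_rfl, hab'.le⟩, ⟨hab'.le, le_rfl⟩]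
    · exact ⟨E i, subset_closure, a, ha, b, hb, hab, hc, he⟩
  choose S hES hS using hex
  intro x hx
  refine ⟨Function.update S k {(n : ℝ)}, ?_, ?_, ?_⟩
  · rw [hM]
    intro i
    by_cases hik : i = k
    · subst hik
      exact Or.inl ⟨n, hn, by simp⟩
    · right
      rw [Function.update_of_ne hik]
      exact hS i
  · ext i
    simp only [singDirs, mem_singleton_iff, mem_ofPred_eq]
    by_cases hik : i = k
    · subst hik
      simp
    · rw [Function.update_of_ne hik]
      refine ⟨fun ⟨r, hr⟩ => ?_, fun h => absurd h hik⟩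
      obtain ⟨a, _, b, _, hab, _, he⟩ := hS i
      rw [he] at hr
      exact absurd hr (Ioo_ne_singleton (by exact_mod_cast hab) r)
  · intro i
    have hxi := hx i (mem_univ i)
    by_cases hik : i = k
    · subst hik
      rw [Function.update_self] at hxi ⊢
      exact subset_closure hxi
    · rw [Function.update_of_ne hik] at hxi ⊢
      exact hES i hxi

theorem good_of_tensor {d : ℕ} {N : Fin d → ℕ} (hN : ∀ k, 0 < N k)
    {G : Fin d → Finset ℕ} (hG : ∀ k, 0 ∈ G k ∧ N k ∈ G k ∧ ∀ n ∈ G k, n ≤ N k)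
    {M : Set (Box d)} (hM : M = {E | ∀ k, (∃ n ∈ G k, E k = {(n : ℝ)}) ∨
          (∃ a ∈ G k, ∃ b ∈ G k, a < b ∧ (∀ c ∈ G k, c ≤ a ∨ b ≤ c) ∧
            E k = Set.Ioo (a : ℝ) (b : ℝ))}) : Good G M := by
  have hmem : ∀ E ∈ M, ∀ k, (∃ n ∈ G k, E k = {(n : ℝ)}) ∨
          (∃ a ∈ G k, ∃ b ∈ G k, a < b ∧ (∀ c ∈ G k, c ≤ a ∨ b ≤ c) ∧
            E k = Set.Ioo (a : ℝ) (b : ℝ)) := by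
    intro E hE
    rw [hM] at hE
    exact hE
  have hint : ∀ E ∈ M, ∀ k, ∀ a b : ℝ, a < b → E k = Ioo a b →
      ∃ a' ∈ G k, ∃ b' ∈ G k, a' < b' ∧ (∀ c ∈ G k, c ≤ a' ∨ b' ≤ c) ∧
        a = (a' : ℝ) ∧ b = (b' : ℝ) := by
    intro E hE k a b hab he
    rcases hmem E hE k with ⟨m, hm, he'⟩ | ⟨a', ha, b', hb, hab', hc, he'⟩
    · rw [he] at he'
      exact absurd he' (Ioo_ne_singleton hab _)
    · rw [he] at he'
      exact ⟨a', ha, b', hb, hab', hc, Ioo_inj hab (by exact_mod_cast hab') he'⟩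
  refine ⟨?_, ?_, ?_, ?_, ?_⟩
  · intro E hE k
    rcases hmem E hE k with ⟨m, hm, he⟩ | ⟨a, ha, b, hb, hab, hc, he⟩
    · exact Or.inl ⟨m, he⟩
    · exact Or.inr ⟨a, b, ⟨a, ha, b, hb, hc, 0, 0, b - a, by omega, by omega, by norm_num,
        by omega, by omega⟩, he⟩
  · intro Q hQ hs E hE hmeet k
    obtain ⟨x, hxE, hxQ⟩ := hmeet k
    rcases hmem E hE k with ⟨m, hm, he⟩ | ⟨a, ha, b, hb, hab, hc, he⟩
    · rw [he, mem_singleton_iff] at hxE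
      rw [he, singleton_subset_iff, ← hxE]
      exact hxQ
    · rcases hmem Q hQ k with ⟨m, hm, he'⟩ | ⟨a', ha', b', hb', hab', hc', he'⟩
      · have : k ∈ singDirs Q := ⟨_, he'⟩
        rw [hs] at this
        exact absurd this (notMem_empty _)
      · have hab'' : (a' : ℝ) < b' := by exact_mod_cast hab'
        rw [he] at hxE
        rw [he', closure_Ioo_of_lt hab''] at hxQ
        obtain ⟨rfl, rfl⟩ := grid_interval_eq ha hb hc ha' hb' hc' hab' hxE hxQ
        rw [he, he']
        exact subset_closure
  · intro E hE k hr
    rcases hmem E hE k with ⟨m, hm, he⟩ | ⟨a, ha, b, hb, hab, hc, he⟩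
    · have := tensor_update_subset hN hG hM hE k hm
      rwa [← he, Function.update_eq_self] at this
    · obtain ⟨r, hr⟩ := hr
      rw [he] at hr
      exact absurd hr (Ioo_ne_singleton (by exact_mod_cast hab) r)
  · intro E hE k a b hab he
    obtain ⟨a', ha, b', hb, hab', hc, rfl, rfl⟩ := hint E hE k a b hab he
    exact ⟨tensor_update_subset hN hG hM hE k ha, tensor_update_subset hN hG hM hE k hb⟩
  · rintro E hE k a b hab he x hx ⟨F, hF, hs, hxF⟩
    obtain ⟨a', ha, b', hb, hab', hc, rfl, rfl⟩ := hint E hE k a b hab he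
    have hk : k ∈ singDirs F := by rw [hs]; rfl
    obtain ⟨r, hr⟩ := hk
    have h1 := hx k (mem_univ k)
    have h2 := hxF k
    rcases hmem F hF k with ⟨m, hm, he'⟩ | ⟨a', ha', b', hb', hab', hc', he'⟩
    · rw [he', closure_singleton, mem_singleton_iff] at h2
      rw [he, h2] at h1
      have h3 : a' < m := by exact_mod_cast h1.1
      have h4 : m < b' := by exact_mod_cast h1.2
      have := hc m hm
      omega
    · rw [he'] at hr
      exact absurd hr (Ioo_ne_singleton (by exact_mod_cast hab') r)

theorem singDirs_update_of_ne {d : ℕ} {E : Box d} {j : Fin d} {X : Set ℝ}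
    (hE : ∀ r : ℝ, E j ≠ {r}) (hX : ∀ r : ℝ, X ≠ {r}) :
    singDirs (Function.update E j X) = singDirs E := by
  ext i
  simp only [singDirs, mem_ofPred_eq]
  by_cases hij : i = j
  · subst hij
    simp [hE, hX]
  · rw [Function.update_of_ne hij]

theorem toSet_mono {d : ℕ} {E F : Box d} (h : ∀ k, E k ⊆ F k) : toSet E ⊆ toSet F :=
  fun _ hx k hk => h k (hx k hk)

/-- Bisections preserve `Good`. The entities of the new mesh are compared with their parents in the
old one; `hnocut` in the proof is where dyadicity enters. -/
theorem good_step {d : ℕ} {N : Fin d → ℕ} {G : Fin d → Finset ℕ} {M M' : Set (Box d)}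
    (hM : Good G M) (hstep : BisectStep N M M') : Good G M' := by
  obtain ⟨Q, hQ, j, a, b, m, hcell, hQj, hm, hM'⟩ := hstep
  have hab : (a : ℝ) < b := by
    obtain ⟨a', b', hlt, -, he⟩ := hcell j
    have hlt' : (a' : ℝ) < b' := by exact_mod_cast hlt
    rw [← nonempty_Ioo, ← hQj, he]
    exact nonempty_Ioo.2 hlt'
  have hmR : (a : ℝ) + b = 2 * m := by exact_mod_cast hm
  have ham : (a : ℝ) < m := by linarith
  have hmb : (m : ℝ) < b := by linarith
  have hQns : ∀ k r, Q k ≠ {r} := by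
    intro k r
    obtain ⟨a', b', hlt, -, he⟩ := hcell k
    rw [he]
    exact Ioo_ne_singleton (by exact_mod_cast hlt) r
  have hQs : singDirs Q = ∅ := by
    ext k
    simp [singDirs, hQns]
  have hdy : IsDyadic (G j) a b := by
    rcases hM.comp Q hQ j with ⟨r, hr⟩ | ⟨a', b', h, he⟩
    · exact absurd hr (hQns j r)
    · have h2 := Ioo_inj hab (by exact_mod_cast h.lt) (hQj.symm.trans he)
      have h3 : a = a' := by exact_mod_cast h2.1
      have h4 : b = b' := by exact_mod_cast h2.2
      rwa [h3, h4]
  let split : Box d → Prop := fun E => E ∈ M ∧ (∀ k, E k ⊆ closure (Q k)) ∧ E j = Q j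
  have hmem : ∀ E', E' ∈ M' ↔ (E' ∈ M ∧ ¬ split E') ∨ ∃ E, split E ∧
      (E' = Function.update E j (Ioo (a : ℝ) m) ∨ E' = Function.update E j {(m : ℝ)} ∨
        E' = Function.update E j (Ioo (m : ℝ) b)) := by
    intro E'
    rw [hM', midSplit, hQj, csInf_Ioo hab, csSup_Ioo hab]
    simp only [split, hQj, mem_union, mem_sdiff, mem_ofPred_eq, mem_iUnion, exists_prop,
      mem_insert_iff, mem_singleton_iff]
  clear hM'
  -- Every new entity is contained in an old one, differing at most in the `j`-th component.
  have hpar : ∀ E' ∈ M', ∃ E ∈ M, (∀ k, k ≠ j → E' k = E k) ∧ E' j ⊆ E j ∧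
      ((∀ r : ℝ, E' j ≠ {r}) → ∀ r : ℝ, E j ≠ {r}) := by
    intro E' hE'
    rcases (hmem E').1 hE' with ⟨h, -⟩ | ⟨E, hE, h⟩
    · exact ⟨E', h, fun _ _ => rfl, Subset.rfl, id⟩
    · refine ⟨E, hE.1, ?_, ?_, fun _ r => hE.2.2 ▸ hQns j r⟩
      · intro k hk
        rcases h with rfl | rfl | rfl <;> exact Function.update_of_ne hk _ _
      · rw [hE.2.2, hQj]
        rcases h with rfl | rfl | rfl <;> rw [Function.update_self]
        · exact Ioo_subset_Ioo_right hmb.le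
        · exact singleton_subset_iff.2 ⟨ham, hmb⟩
        · exact Ioo_subset_Ioo_left ham.le
  have hpar_sub : ∀ E' E : Box d, (∀ k, k ≠ j → E' k = E k) → E' j ⊆ E j → ∀ k, E' k ⊆ E k := by
    intro E' E h1 h2 k
    by_cases hk : k = j
    · subst hk; exact h2
    · exact (h1 k hk).subset
  have hQsplit : split Q := ⟨hQ, fun _ => subset_closure, rfl⟩
  -- The bisection adds the hyperface at the midpoint of `Q` to the `j`-orthogonal skeleton.
  have hface : ∀ x : Fin d → ℝ, x j = m → (∀ i, i ≠ j → x i ∈ closure (Q i)) →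
      x ∈ skelOf M' j := by
    intro x hxj hx
    refine ⟨Function.update Q j {(m : ℝ)}, (hmem _).2 (Or.inr ⟨Q, hQsplit, by simp⟩), ?_, ?_⟩
    · ext i
      simp only [singDirs, mem_ofPred_eq, mem_singleton_iff]
      by_cases hij : i = j
      · subst hij; simp
      · simp [hQns, hij]
    · intro i
      by_cases hij : i = j
      · subst hij; simp [hxj]
      · rw [Function.update_of_ne hij]; exact hx i hij
  have hmono : ∀ k, skelOf M k ⊆ skelOf M' k := by
    rintro k x ⟨F, hF, hs, hx⟩
    by_cases hsp : split F
    · have hFns : ∀ r, F j ≠ {r} := fun r => hsp.2.2 ▸ hQns j r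
      have hxj := hx j
      rw [hsp.2.2, hQj, closure_Ioo_of_lt hab] at hxj
      rcases le_total (x j) m with hle | hle
      · refine ⟨Function.update F j (Ioo (a : ℝ) m),
          (hmem _).2 (Or.inr ⟨F, hsp, by simp⟩), ?_, ?_⟩
        · rw [singDirs_update_of_ne hFns (Ioo_ne_singleton ham), hs]
        · intro i
          by_cases hij : i = j
          · subst hij
            rw [Function.update_self, closure_Ioo_of_lt ham]
            exact ⟨hxj.1, hle⟩
          · rw [Function.update_of_ne hij]; exact hx i
      · refine ⟨Function.update F j (Ioo (m : ℝ) b),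
          (hmem _).2 (Or.inr ⟨F, hsp, by simp⟩), ?_, ?_⟩
        · rw [singDirs_update_of_ne hFns (Ioo_ne_singleton hmb), hs]
        · intro i
          by_cases hij : i = j
          · subst hij
            rw [Function.update_self, closure_Ioo_of_lt hmb]
            exact ⟨hle, hxj.2⟩
          · rw [Function.update_of_ne hij]; exact hx i
    · exact ⟨F, (hmem F).2 (Or.inl ⟨hF, hsp⟩), hs, hx⟩
  have hrev : ∀ k x, x ∈ skelOf M' k → x ∈ skelOf M k ∨
      (k = j ∧ x j = m ∧ ∀ i, x i ∈ closure (Q i)) := by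
    rintro k x ⟨F, hF, hs, hx⟩
    rcases (hmem F).1 hF with ⟨h, -⟩ | ⟨E, hE, h⟩
    · exact Or.inl ⟨F, h, hs, hx⟩
    · have hEns : ∀ r, E j ≠ {r} := fun r => hE.2.2 ▸ hQns j r
      rcases h with rfl | rfl | rfl
      · left
        refine ⟨E, hE.1, ?_, ?_⟩
        · rw [← hs, singDirs_update_of_ne hEns (Ioo_ne_singleton ham)]
        · intro i
          refine closure_mono ?_ (hx i)
          by_cases hij : i = j
          · subst hij
            rw [Function.update_self, hE.2.2, hQj]
            exact Ioo_subset_Ioo_right hmb.le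
          · rw [Function.update_of_ne hij]
      · right
        have hj : j ∈ singDirs (Function.update E j {(m : ℝ)}) := ⟨m, Function.update_self ..⟩
        rw [hs, mem_singleton_iff] at hj
        have hxj := hx j
        rw [Function.update_self, closure_singleton, mem_singleton_iff] at hxj
        refine ⟨hj.symm, hxj, fun i => ?_⟩
        by_cases hij : i = j
        · subst hij
          rw [hQj, closure_Ioo_of_lt hab, hxj]
          exact ⟨ham.le, hmb.le⟩
        · have hxi := hx i
          rw [Function.update_of_ne hij] at hxi
          exact closure_minimal (hE.2.1 i) isClosed_closure hxi
      · left
        refine ⟨E, hE.1, ?_, ?_⟩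
        · rw [← hs, singDirs_update_of_ne hEns (Ioo_ne_singleton hmb)]
        · intro i
          refine closure_mono ?_ (hx i)
          by_cases hij : i = j
          · subst hij
            rw [Function.update_self, hE.2.2, hQj]
            exact Ioo_subset_Ioo_left ham.le
          · rw [Function.update_of_ne hij]
  -- After the bisection no entity touching `Q` crosses the midpoint: by dyadicity an interval
  -- inside `cl (Q j)` around `m` would be `Q j` itself, and such entities have been split.
  have hnocut : ∀ E' ∈ M', (∀ k, (E' k ∩ closure (Q k)).Nonempty) →
      (∃ r : ℝ, E' j = {r}) ∨ ∃ c e : ℝ, c < e ∧ E' j = Ioo c e ∧ (e ≤ m ∨ m ≤ c) := by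
    intro E' hE' hmeet
    rcases (hmem E').1 hE' with ⟨h, hns⟩ | ⟨E, hE, h⟩
    · rcases hM.comp E' h j with hr | ⟨c, e, hdy', he⟩
      · exact Or.inl hr
      · right
        have hce : (c : ℝ) < e := by exact_mod_cast hdy'.lt
        refine ⟨c, e, hce, he, ?_⟩
        by_contra hcon
        push Not at hcon
        have hsub := hM.conf Q hQ hQs E' h hmeet
        have hj := hsub j
        rw [hQj, he, closure_Ioo_of_lt hab] at hj
        have hj' := closure_minimal hj isClosed_Icc
        rw [closure_Ioo_of_lt hce] at hj'
        have hc := hj' ⟨le_rfl, hce.le⟩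
        have he' := hj' ⟨hce.le, le_rfl⟩
        obtain ⟨h1, h2⟩ := hdy'.eq_of_mid_mem hdy hm (by exact_mod_cast hcon.2)
          (by exact_mod_cast hcon.1) (by exact_mod_cast hc.1) (by exact_mod_cast he'.2)
        exact hns ⟨h, hsub, by rw [he, hQj, h1, h2]⟩
    · rcases h with rfl | rfl | rfl <;> rw [Function.update_self]
      · exact Or.inr ⟨a, m, ham, rfl, Or.inl le_rfl⟩
      · exact Or.inl ⟨m, rfl⟩
      · exact Or.inr ⟨m, b, hmb, rfl, Or.inr le_rfl⟩
  have hcomp : ∀ E ∈ M', ∀ k, (∃ r : ℝ, E k = {r}) ∨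
      ∃ a b : ℕ, IsDyadic (G k) a b ∧ E k = Ioo (a : ℝ) b := by
    intro E' hE' k
    by_cases hk : k = j
    · subst hk
      rcases (hmem E').1 hE' with ⟨h, -⟩ | ⟨E, hE, h⟩
      · exact hM.comp E' h k
      · rcases h with rfl | rfl | rfl <;> rw [Function.update_self]
        · exact Or.inr ⟨a, m, (hdy.halves hm).1, rfl⟩
        · exact Or.inl ⟨m, rfl⟩
        · exact Or.inr ⟨m, b, (hdy.halves hm).2, rfl⟩
    · obtain ⟨E, hE, h1, -, -⟩ := hpar E' hE'
      rw [h1 k hk]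
      exact hM.comp E hE k
  have hnonempty : ∀ E' ∈ M', ∀ k, (E' k).Nonempty := by
    intro E hE k
    rcases hcomp E hE k with ⟨r, hr⟩ | ⟨c, e, hd, he⟩
    · rw [hr]; exact singleton_nonempty r
    · rw [he]; exact nonempty_Ioo.2 (by exact_mod_cast hd.lt)
  refine ⟨hcomp, ?_, ?_, ?_, ?_⟩
  · intro Q₁ hQ₁ hs E' hE' hmeet
    obtain ⟨E, hE, hEk, hEj, -⟩ := hpar E' hE'
    have hEE := hpar_sub E' E hEk hEj
    rcases (hmem Q₁).1 hQ₁ with ⟨h, -⟩ | ⟨C, hC, h⟩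
    · have := hM.conf Q₁ h hs E hE fun k => (hmeet k).mono (inter_subset_inter_left _ (hEE k))
      exact fun k => (hEE k).trans (this k)
    · have hCns : ∀ r, C j ≠ {r} := fun r => hC.2.2 ▸ hQns j r
      have hQC : (∀ k, k ≠ j → Q₁ k = C k) ∧
          (Q₁ j = Ioo (a : ℝ) m ∨ Q₁ j = Ioo (m : ℝ) b) := by
        rcases h with rfl | rfl | rfl
        · exact ⟨fun k hk => Function.update_of_ne hk _ _, Or.inl (Function.update_self ..)⟩
        · have hj : j ∈ singDirs (Function.update C j {(m : ℝ)}) := ⟨m, Function.update_self ..⟩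
          rw [hs] at hj
          exact absurd hj (notMem_empty _)
        · exact ⟨fun k hk => Function.update_of_ne hk _ _, Or.inr (Function.update_self ..)⟩
      have hCs : singDirs C = ∅ := by
        rw [← hs]
        rcases h with rfl | rfl | rfl
        · rw [singDirs_update_of_ne hCns (Ioo_ne_singleton ham)]
        · have hj : j ∈ singDirs (Function.update C j {(m : ℝ)}) := ⟨m, Function.update_self ..⟩
          rw [hs] at hj
          exact absurd hj (notMem_empty _)
        · rw [singDirs_update_of_ne hCns (Ioo_ne_singleton hmb)]
      have hQCj : Q₁ j ⊆ C j := by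
        rw [hC.2.2, hQj]
        rcases hQC.2 with h | h <;> rw [h]
        exacts [Ioo_subset_Ioo_right hmb.le, Ioo_subset_Ioo_left ham.le]
      have hsubC := hM.conf C hC.1 hCs E hE fun k => (hmeet k).mono
        (inter_subset_inter (hEE k) (closure_mono (hpar_sub Q₁ C hQC.1 hQCj k)))
      intro k
      by_cases hk : k = j
      · subst hk
        have hE'C : E' k ⊆ Icc (a : ℝ) b := by
          have := (hEE k).trans (hsubC k)
          rwa [hC.2.2, hQj, closure_Ioo_of_lt hab] at this
        obtain ⟨y, hyE, hyQ⟩ := hmeet k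
        rcases hnocut E' hE' (fun i => by
            obtain ⟨z, hz⟩ := hnonempty E' hE' i
            exact ⟨z, hz, closure_minimal (hC.2.1 i) isClosed_closure (hsubC i (hEE i hz))⟩) with
          ⟨r, hr⟩ | ⟨c, e, hce, he, hor⟩
        · rw [hr, mem_singleton_iff] at hyE
          rw [hr, singleton_subset_iff, ← hyE]
          exact hyQ
        · rw [he] at hyE
          rcases hQC.2 with hq | hq
          · rw [hq, closure_Ioo_of_lt ham] at hyQ ⊢
            intro z hz
            have hz1 := hE'C hz
            rw [he] at hz
            rcases hor with hor | hor
            · exact ⟨hz1.1, hz.2.le.trans hor⟩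
            · exact absurd (hyE.1.trans_le hyQ.2) (not_lt.2 hor)
          · rw [hq, closure_Ioo_of_lt hmb] at hyQ ⊢
            intro z hz
            have hz1 := hE'C hz
            rw [he] at hz
            rcases hor with hor | hor
            · exact absurd (hyQ.1.trans_lt hyE.2) (not_lt.2 hor)
            · exact ⟨hor.trans hz.1.le, hz1.2⟩
      · rw [hQC.1 k hk]
        exact (hEE k).trans (hsubC k)
  · intro E' hE' k hr
    by_cases hk : k = j
    · subst hk
      rcases (hmem E').1 hE' with ⟨h, -⟩ | ⟨E, hE, h⟩
      · exact (hM.sing E' h k hr).trans (hmono k)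
      · obtain ⟨r, hr⟩ := hr
        rcases h with rfl | rfl | rfl
        · rw [Function.update_self] at hr
          exact absurd hr (Ioo_ne_singleton ham r)
        · intro x hx
          refine hface x ?_ fun i hi => ?_
          · simpa using hx k (mem_univ k)
          · have := hx i (mem_univ i)
            rw [Function.update_of_ne hi] at this
            exact hE.2.1 i this
        · rw [Function.update_self] at hr
          exact absurd hr (Ioo_ne_singleton hmb r)
    · obtain ⟨E, hE, hEk, hEj, -⟩ := hpar E' hE'
      rw [hEk k hk] at hr
      exact (toSet_mono (hpar_sub E' E hEk hEj)).trans ((hM.sing E hE k hr).trans (hmono k))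
  · intro E' hE' k c e hce he
    by_cases hk : k = j
    · subst hk
      rcases (hmem E').1 hE' with ⟨h, -⟩ | ⟨E, hE, h⟩
      · have := hM.ends E' h k c e hce he
        exact ⟨this.1.trans (hmono k), this.2.trans (hmono k)⟩
      · have hold := hM.ends E hE.1 k a b hab (hE.2.2.trans hQj)
        have hmid : toSet (Function.update E k {(m : ℝ)}) ⊆ skelOf M' k := by
          intro x hx
          refine hface x ?_ fun i hi => ?_
          · simpa using hx k (mem_univ k)
          · have := hx i (mem_univ i)
            rw [Function.update_of_ne hi] at this
            exact hE.2.1 i this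
        rcases h with rfl | rfl | rfl
        · rw [Function.update_self] at he
          obtain ⟨rfl, rfl⟩ := Ioo_inj ham hce he
          rw [Function.update_idem, Function.update_idem]
          exact ⟨hold.1.trans (hmono k), hmid⟩
        · rw [Function.update_self] at he
          exact absurd he.symm (Ioo_ne_singleton hce _)
        · rw [Function.update_self] at he
          obtain ⟨rfl, rfl⟩ := Ioo_inj hmb hce he
          rw [Function.update_idem, Function.update_idem]
          exact ⟨hmid, hold.2.trans (hmono k)⟩
    · obtain ⟨E, hE, hEk, hEj, -⟩ := hpar E' hE'
      rw [hEk k hk] at he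
      have hold := hM.ends E hE k c e hce he
      have hupd : ∀ X : Set ℝ,
          toSet (Function.update E' k X) ⊆ toSet (Function.update E k X) := by
        intro X
        refine toSet_mono fun i => ?_
        by_cases hik : i = k
        · subst hik; simp
        · rw [Function.update_of_ne hik, Function.update_of_ne hik]
          exact hpar_sub E' E hEk hEj i
      exact ⟨(hupd _).trans (hold.1.trans (hmono k)), (hupd _).trans (hold.2.trans (hmono k))⟩
  · intro E' hE' k c e hce he x hx hxs
    obtain ⟨E, hE, hEk, hEj, hEns⟩ := hpar E' hE'
    have hxE := toSet_mono (hpar_sub E' E hEk hEj) hx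
    rcases hrev k x hxs with hold | ⟨rfl, hxm, hxQ⟩
    · have hns : ∀ r : ℝ, E k ≠ {r} := by
        by_cases hk : k = j
        · subst hk
          exact hEns fun r => he ▸ Ioo_ne_singleton hce r
        · rw [← hEk k hk, he]
          exact Ioo_ne_singleton hce
      rcases hM.comp E hE k with ⟨r, hr⟩ | ⟨c', e', hd, he'⟩
      · exact hns r hr
      · exact hM.avoid E hE k c' e' (by exact_mod_cast hd.lt) he' x hxE hold
    · have hxk := hx k (mem_univ k)
      rcases hnocut E' hE' (fun i => ⟨x i, hx i (mem_univ i), hxQ i⟩) with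
        ⟨r, hr⟩ | ⟨c', e', hce', he', hor⟩
      · rw [he] at hr
        exact Ioo_ne_singleton hce r hr
      · rw [he', hxm] at hxk
        rcases hor with hor | hor
        · exact absurd hxk.2 (not_lt.2 hor)
        · exact absurd hxk.1 (not_lt.2 hor)

theorem exists_good {d : ℕ} {N : Fin d → ℕ} (hN : ∀ k, 0 < N k) (T : TMesh d N) :
    ∃ G, Good G T.entities := by
  obtain ⟨M₀, ⟨G, hG, hM₀⟩, hsteps⟩ := T.constructed
  refine ⟨G, ?_⟩
  generalize T.entities = M at hsteps
  induction hsteps with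
  | refl => exact good_of_tensor hN hG hM₀
  | tail _ hstep ih => exact good_step ih hstep

/-! ### Local knot vectors of anchors -/

section Anchors

variable {d : ℕ} {N p : Fin d → ℕ} {T : TMesh d N} {A A₁ A₂ : Box d}

theorem gv_finite (T : TMesh d N) (k : Fin d) (E : Box d) : (gv T k E).Finite :=
  (finite_Iic (N k)).subset fun _ hn => hn.1

/-- The `k`-th component of an anchor is `{a}` or `(a, b)` according to the parity of `p k`, with
endpoints inside the active region. -/
theorem anchor_comp (hA : IsAnchor p T A) (k : Fin d) :
    ∃ a : ℕ, halfdeg p k ≤ a ∧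
      ((Odd (p k) ∧ A k = {(a : ℝ)} ∧ a + halfdeg p k ≤ N k) ∨
        (¬ Odd (p k) ∧ ∃ b : ℕ, a < b ∧ A k = Ioo (a : ℝ) b ∧ b + halfdeg p k ≤ N k)) := by
  have hent := T.mem_entity A hA.1
  have hne : ∀ i, ∃ y, y ∈ A i := by
    intro i
    rcases hent i with ⟨n, -, he⟩ | ⟨a, b, hab, -, he⟩
    · exact ⟨n, by rw [he]; rfl⟩
    · rw [he]; exact nonempty_Ioo.2 (by exact_mod_cast hab)
  choose y hy using hne
  have hsub : A k ⊆ Icc (halfdeg p k : ℝ) ((N k : ℝ) - halfdeg p k) := by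
    intro t ht
    have hmem : Function.update y k t ∈ toSet A := by
      intro i _
      by_cases hik : i = k
      · subst hik; simpa using ht
      · rw [Function.update_of_ne hik]; exact hy i
    simpa using hA.2.1 hmem k (mem_univ k)
  rcases hent k with ⟨a, -, he⟩ | ⟨a, b, hab, -, he⟩
  · rw [he, singleton_subset_iff] at hsub
    refine ⟨a, by exact_mod_cast hsub.1, Or.inl ⟨(hA.2.2 k).1 ⟨a, he⟩, he, ?_⟩⟩
    have := hsub.2
    have h2 : (a : ℝ) + halfdeg p k ≤ N k := by linarith
    exact_mod_cast h2
  · have hab' : (a : ℝ) < b := by exact_mod_cast hab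
    rw [he] at hsub
    have hcl := closure_minimal hsub isClosed_Icc
    rw [closure_Ioo_of_lt hab'] at hcl
    have h1 := hcl ⟨le_rfl, hab'.le⟩
    have h2 := hcl ⟨hab'.le, le_rfl⟩
    refine ⟨a, by exact_mod_cast h1.1, Or.inr ⟨fun hodd => ?_, b, hab, he, ?_⟩⟩
    · obtain ⟨r, hr⟩ := (hA.2.2 k).2 hodd
      rw [he] at hr
      exact Ioo_ne_singleton hab' r hr
    · have := h2.2
      have h3 : (b : ℝ) + halfdeg p k ≤ N k := by linarith
      exact_mod_cast h3

/-- A mesh with an anchor has no degenerate direction. -/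
theorem pos_of_anchor (hA : IsAnchor p T A) (k : Fin d) : 0 < N k := by
  obtain ⟨a, ha, ⟨hodd, -, h⟩ | ⟨-, b, hab, -, h⟩⟩ := anchor_comp hA k
  · have : 0 < halfdeg p k := by
      have := hodd.pos
      unfold halfdeg
      omega
    omega
  · omega

theorem mem_slice_of_mem_proj (hA : IsAnchor p T A) {k : Fin d} {n : ℕ} (hn : n ≤ N k)
    {x : Fin d → ℝ} (hx : x ∈ toSet (proj A k n)) : x ∈ slice N k n := by
  have hxk : x k = n := by
    have := hx k (mem_univ k)
    simpa [proj] using this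
  refine ⟨fun i _ => ?_, hxk⟩
  by_cases hik : i = k
  · subst hik
    rw [hxk]
    exact ⟨Nat.cast_nonneg _, by exact_mod_cast hn⟩
  · have hxi := hx i (mem_univ i)
    rw [proj, Function.update_of_ne hik] at hxi
    rcases T.mem_entity A hA.1 i with ⟨m, hm, he⟩ | ⟨a, b, -, hb, he⟩
    · rw [he, mem_singleton_iff] at hxi
      rw [hxi]
      exact ⟨Nat.cast_nonneg _, by exact_mod_cast hm⟩
    · rw [he] at hxi
      have hb' : (b : ℝ) ≤ N i := by exact_mod_cast hb
      exact ⟨(Nat.cast_nonneg a).trans hxi.1.le, hxi.2.le.trans hb'⟩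

theorem exists_anchorKV (hadm : Admissible p T) (hA : IsAnchor p T A) (k : Fin d) :
    ∃ V, IsAnchorKV T p A k V := by
  obtain ⟨G, hgood⟩ := exists_good (pos_of_anchor hA) T
  have hframe : ∀ n, (n ≤ halfdeg p k ∨ N k - halfdeg p k ≤ n) → n ≤ N k → n ∈ gv T k A :=
    fun n hn hnN => ⟨hnN, fun x hx => hadm.2 k n (hn.imp id fun h => ⟨h, hnN⟩)
      (mem_slice_of_mem_proj hA hnN hx)⟩
  obtain ⟨a, ha, ⟨hodd, he, hle⟩ | ⟨hodd, b, hab, he, hle⟩⟩ := anchor_comp hA k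
  · have hmem : a ∈ gv T k A := by
      refine ⟨by omega, ?_⟩
      rw [proj, ← he, Function.update_eq_self, skel_eq_skelOf]
      exact hgood.sing A hA.1 k ⟨a, he⟩
    obtain ⟨V, h1, h2, h3, h4⟩ := exists_block (gv_finite T k A) hmem
      (Finset.range (halfdeg p k)) (Finset.Ioc (N k - halfdeg p k) (N k))
      (fun x hx => by
        rw [Finset.mem_range] at hx
        exact ⟨hframe x (Or.inl hx.le) (by omega), by omega⟩)
      (fun x hx => by
        rw [Finset.mem_Ioc] at hx
        exact ⟨hframe x (Or.inr hx.1.le) hx.2, by omega⟩) (Finset.card_range _) rfl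
    refine ⟨V, h1, ?_, a, ?_, h3, h4⟩
    · rw [h2, Nat.card_Ioc]
      obtain ⟨q, hq⟩ := hodd
      unfold halfdeg at *
      omega
    · rw [he, csInf_singleton]
  · have hab' : (a : ℝ) < b := by exact_mod_cast hab
    have hmem : a ∈ gv T k A := by
      refine ⟨by omega, ?_⟩
      rw [skel_eq_skelOf]
      exact (hgood.ends A hA.1 k a b hab' he).1
    obtain ⟨V, h1, h2, h3, h4⟩ := exists_block (gv_finite T k A) hmem
      (Finset.range (halfdeg p k)) (Finset.Icc (N k - halfdeg p k) (N k))
      (fun x hx => by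
        rw [Finset.mem_range] at hx
        exact ⟨hframe x (Or.inl hx.le) (by omega), by omega⟩)
      (fun x hx => by
        rw [Finset.mem_Icc] at hx
        exact ⟨hframe x (Or.inr hx.1) hx.2, by omega⟩) (Finset.card_range _) rfl
    refine ⟨V, h1, ?_, a, ?_, h3, h4⟩
    · rw [h2, Nat.card_Icc]
      obtain ⟨q, hq⟩ := Nat.not_odd_iff_even.1 hodd
      unfold halfdeg at *
      omega
    · rw [he, csInf_Ioo hab']

theorem anchorKV_spec (hadm : Admissible p T) (hA : IsAnchor p T A) (k : Fin d) :
    IsAnchorKV T p A k (anchorKV T p A k) := by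
  have h := exists_anchorKV hadm hA k
  rw [anchorKV, dif_pos h]
  exact h.choose_spec

theorem rank_inj {V : Set ℕ} (hV : V.Finite) {a b : ℕ} (ha : a ∈ V) (hb : b ∈ V)
    (h : {v ∈ V | v < a}.ncard = {v ∈ V | v < b}.ncard) : a = b := by
  have key : ∀ a b : ℕ, a ∈ V → a < b → {v ∈ V | v < a}.ncard < {v ∈ V | v < b}.ncard := by
    intro a b ha hab
    refine ncard_lt_ncard ⟨fun v hv => ⟨hv.1, hv.2.trans hab⟩, fun hsub => ?_⟩
      (hV.subset fun v hv => hv.1)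
    exact lt_irrefl a (hsub ⟨ha, hab⟩).2
  rcases lt_trichotomy a b with hab | hab | hab
  · exact absurd h (key a b ha hab).ne
  · exact hab
  · exact absurd h (key b a hb hab).ne'

/-- If an interval component `(a, b₁)` of an anchor has knot vector `V`, and `V` also consists of
global knots of an entity with component `(a, b₂)`, then `b₂ ≤ b₁`: the successor of `a` in `V` is
`b₁`, whereas no global knot of the second entity lies strictly between `a` and `b₂`. -/
theorem interval_end_le {k : Fin d} {V : Set ℕ} {G : Fin d → Finset ℕ}
    (hgood : Good G T.entities) (hA₁ : IsAnchor p T A₁) (hA₂ : IsAnchor p T A₂)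
    (hV₁ : IsAnchorKV T p A₁ k V) (hV₂ : V ⊆ gv T k A₂) {a b₁ b₂ : ℕ} (hab₁ : a < b₁)
    (hab₂ : a < b₂) (hb₁ : b₁ ≤ N k) (he₁ : A₁ k = Ioo (a : ℝ) b₁)
    (he₂ : A₂ k = Ioo (a : ℝ) b₂) : b₂ ≤ b₁ := by
  have hmiss : ∀ {A : Box d} {b n : ℕ}, IsAnchor p T A → a < b → A k = Ioo (a : ℝ) b →
      n ∈ gv T k A → a < n → b ≤ n := by
    intro A b n hA hab he hn han
    by_contra hcon
    push Not at hcon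
    have hne : ∀ i, ∃ y, y ∈ A i := by
      intro i
      rcases T.mem_entity A hA.1 i with ⟨n, -, he⟩ | ⟨a, b, hab, -, he⟩
      · exact ⟨n, by rw [he]; rfl⟩
      · rw [he]; exact nonempty_Ioo.2 (by exact_mod_cast hab)
    choose y hy using hne
    have hx : Function.update y k (n : ℝ) ∈ toSet A := by
      intro i _
      by_cases hik : i = k
      · subst hik
        rw [Function.update_self, he]
        exact ⟨by exact_mod_cast han, by exact_mod_cast hcon⟩
      · rw [Function.update_of_ne hik]; exact hy i
    have hx' : Function.update y k (n : ℝ) ∈ toSet (proj A k n) := by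
      intro i _
      by_cases hik : i = k
      · subst hik
        simp [proj]
      · rw [proj, Function.update_of_ne hik, Function.update_of_ne hik]; exact hy i
    have hsk := hn.2 hx'
    rw [skel_eq_skelOf] at hsk
    exact hgood.avoid A hA.1 k a b (by exact_mod_cast hab) he _ hx hsk
  obtain ⟨⟨hsub, hfin, hblock⟩, hcard, a', ha', haV, hrank⟩ := hV₁
  have hab' : (a : ℝ) < b₁ := by exact_mod_cast hab₁
  rw [he₁, csInf_Ioo hab'] at ha'
  obtain rfl : a' = a := by exact_mod_cast ha'
  -- `V` has more entries than those up to `a`, so one of them exceeds `a`.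
  obtain ⟨v, hvV, hav⟩ : ∃ v ∈ V, a' < v := by
    by_contra hcon
    push Not at hcon
    have h1 : V ⊆ insert a' {v ∈ V | v < a'} := fun v hv =>
      (hcon v hv).eq_or_lt.imp id fun h => ⟨hv, h⟩
    have h2 := ncard_le_ncard h1 ((hfin.subset fun v hv => hv.1).insert a')
    have h3 := ncard_insert_le a' {v ∈ V | v < a'}
    unfold halfdeg at hrank
    omega
  have hb₁gv : b₁ ∈ gv T k A₁ := by
    refine ⟨hb₁, ?_⟩
    rw [skel_eq_skelOf]
    exact (hgood.ends A₁ hA₁.1 k a' b₁ hab' he₁).2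
  have hb₁V : b₁ ∈ V :=
    hblock b₁ hb₁gv a' haV v hvV hab₁.le (hmiss hA₁ hab₁ he₁ (hsub hvV) hav)
  exact hmiss hA₂ hab₂ he₂ (hV₂ hb₁V) hab₁

/-- The local knot vector in direction `k` determines the `k`-th component of an anchor. -/
theorem comp_eq_of_anchorKV {k : Fin d} {V : Set ℕ} (hA₁ : IsAnchor p T A₁)
    (hA₂ : IsAnchor p T A₂) (hV₁ : IsAnchorKV T p A₁ k V) (hV₂ : IsAnchorKV T p A₂ k V) :
    A₁ k = A₂ k := by
  obtain ⟨G, hgood⟩ := exists_good (pos_of_anchor hA₁) T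
  have hinf : sInf (A₁ k) = sInf (A₂ k) := by
    obtain ⟨hblock, -, a₁, ha₁, haV₁, hrank₁⟩ := hV₁
    obtain ⟨-, -, a₂, ha₂, haV₂, hrank₂⟩ := hV₂
    rw [← ha₁, ← ha₂, rank_inj hblock.2.1 haV₁ haV₂ (hrank₁.trans hrank₂.symm)]
  obtain ⟨a₁, -, ⟨ho₁, he₁, -⟩ | ⟨ho₁, b₁, hab₁, he₁, hb₁⟩⟩ := anchor_comp hA₁ k <;>
    obtain ⟨a₂, -, ⟨ho₂, he₂, -⟩ | ⟨ho₂, b₂, hab₂, he₂, hb₂⟩⟩ := anchor_comp hA₂ k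
  · rw [he₁, he₂, csInf_singleton, csInf_singleton] at hinf
    rw [he₁, he₂, hinf]
  · exact absurd ho₁ ho₂
  · exact absurd ho₂ ho₁
  · rw [he₁, he₂, csInf_Ioo (by exact_mod_cast hab₁), csInf_Ioo (by exact_mod_cast hab₂)] at hinf
    obtain rfl : a₁ = a₂ := by exact_mod_cast hinf
    have h1 := interval_end_le hgood hA₁ hA₂ hV₁ hV₂.1.1 hab₁ hab₂ (by omega) he₁ he₂
    have h2 := interval_end_le hgood hA₂ hA₁ hV₂ hV₁.1.1 hab₂ hab₁ (by omega) he₂ he₁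
    rw [he₁, he₂, le_antisymm h2 h1]

end Anchors

end TSpline

/-- If two distinct anchors have identical local knot vectors in all
directions `k ≠ j`, then they coincide in all components except the `j`-th, their
global knot vectors in direction `j` coincide, and their local knot vectors in
direction `j` differ and overlap. -/
theorem TSpline.equal_knot_vectors_except_one_direction
    {d : ℕ} {N p : Fin d → ℕ} (T : TSpline.TMesh d N)
    (hadm : TSpline.Admissible p T)
    (A₁ A₂ : TSpline.Box d) (h₁ : TSpline.IsAnchor p T A₁)
    (h₂ : TSpline.IsAnchor p T A₂) (hne : A₁ ≠ A₂) (j : Fin d)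
    (heq : ∀ k : Fin d, k ≠ j → TSpline.anchorKV T p A₁ k = TSpline.anchorKV T p A₂ k) :
    (∀ k : Fin d, k ≠ j → A₁ k = A₂ k) ∧
    TSpline.gv T j A₁ = TSpline.gv T j A₂ ∧
    TSpline.anchorKV T p A₁ j ≠ TSpline.anchorKV T p A₂ j ∧
    TSpline.Overlaps (TSpline.anchorKV T p A₁ j) (TSpline.anchorKV T p A₂ j) := by
  have hcomp : ∀ k : Fin d, k ≠ j → A₁ k = A₂ k := fun k hk =>
    comp_eq_of_anchorKV h₁ h₂ (anchorKV_spec hadm h₁ k) (heq k hk ▸ anchorKV_spec hadm h₂ k)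
  have hgv : gv T j A₁ = gv T j A₂ := by
    have hproj : ∀ n, proj A₁ j n = proj A₂ j n := by
      intro n
      funext k
      by_cases hk : k = j
      · subst hk; simp [proj]
      · rw [proj, proj, Function.update_of_ne hk, Function.update_of_ne hk, hcomp k hk]
    simp only [gv, hproj]
  refine ⟨hcomp, hgv, fun hV => hne ?_, gv T j A₁, gv_finite T j A₁, ?_, ?_⟩
  · funext k
    by_cases hk : k = j
    · subst hk
      exact comp_eq_of_anchorKV h₁ h₂ (anchorKV_spec hadm h₁ k) (hV ▸ anchorKV_spec hadm h₂ k)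
    · exact hcomp k hk
  · exact (anchorKV_spec hadm h₁ j).1
  · rw [hgv]
    exact (anchorKV_spec hadm h₂ j).1
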